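/- Let A be an invertible n×n real matrix and B ∈ ℝⁿ (an n×1 matrix) with n ≥ 2, and suppose (A,B) is a controllable pair, i.e., rank[B, AB, …, A^{n−1}B] = n. Let w ∈ ℝⁿ be a nonzero vector orthogonal to the subspace A⁻¹(S_{n−2}), i.e., wᵀv = 0 for all v ∈ A⁻¹(S_{n−2}). Then wᵀB ≠ 0, and setting K₂ := (wᵀB)⁻¹ wᵀ (a 1×n matrix), the matrix A(I − BK₂) is nilpotent ((A(I − BK₂))ⁿ = 0); consequently K := K₂A is a deadbeat gain for x⁺ = Ax + Bu, i.e., A − BK is nilpotent. -/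

import Mathlib

open Matrix

/-- The subspaces `S_k` of the paper: `S_0 = range B` and
`S_{k+1} = A⁻¹(S_k) + S_0`, where `A⁻¹` denotes the preimage. -/
def ctrlS {F : Type*} [Field F] {n m : ℕ} (A : Matrix (Fin n) (Fin n) F)
    (B : Matrix (Fin n) (Fin m) F) : ℕ → Submodule F (Fin n → F)
  | 0 => LinearMap.range B.mulVecLin
  | k + 1 => Submodule.comap A.mulVecLin (ctrlS A B k) ⊔ LinearMap.range B.mulVecLin

/-!
Unfolding the recursion gives `S_k = (A ^ k)⁻¹(R_{k+1})`, where `R_k` is the span of the columns of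
`B, AB, …, A^{k-1}B`; hence controllability says that `S_{n-1}` is the whole space. Since
`S_{n-1} = A⁻¹(S_{n-2}) + range B` and `w ≠ 0` vanishes on the first summand, `wᵀB ≠ 0`. The matrix
`P = I - BK₂` kills `range B` and fixes `A⁻¹(S_j)` pointwise for `j ≤ n - 2`, so `AP` maps `S_{j+1}`
into `S_j`, while `P` kills `S_0`. Therefore `P(AP)^{n-1} = (PA)^{n-1}P` vanishes on `S_{n-1}`, and
multiplying by `A` on either side gives both nilpotency statements.
-/

theorem comap_sup_map_eq {R M N : Type*} [Ring R] [AddCommGroup M] [AddCommGroup N] [Module R M]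
    [Module R N] (f : M →ₗ[R] N) (p : Submodule R N) (q : Submodule R M) :
    (p ⊔ q.map f).comap f = p.comap f ⊔ q := by
  rw [← Submodule.comap_map_sup_of_comap_le (f := f) (p := p.comap f ⊔ q) le_sup_left,
    Submodule.map_sup, sup_right_comm, sup_eq_right.2 (Submodule.map_comap_le f p)]

section Subspaces

variable {F : Type*} [Field F] {n m : ℕ} (A : Matrix (Fin n) (Fin n) F)
  (B : Matrix (Fin n) (Fin m) F)

/-- The subspace of states reachable from the origin in `k` steps of `x⁺ = Ax + Bu`, i.e. the span
of the columns of `B, AB, …, A^{k - 1}B`. -/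
def reachableSubspace (k : ℕ) : Submodule F (Fin n → F) :=
  ⨆ j < k, LinearMap.range (A ^ j * B).mulVecLin

theorem reachableSubspace_one : reachableSubspace A B 1 = LinearMap.range B.mulVecLin := by
  simp [reachableSubspace]

theorem reachableSubspace_succ (k : ℕ) :
    reachableSubspace A B (k + 1) =
      reachableSubspace A B k ⊔ (LinearMap.range B.mulVecLin).map (A ^ k).mulVecLin := by
  rw [reachableSubspace, Nat.iSup_lt_succ, mulVecLin_mul, LinearMap.range_comp,
    ← reachableSubspace]

variable {A B} in
theorem reachableSubspace_eq_top_of_rank_eq {k : ℕ} {c : Fin m}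
    (h : (Matrix.of fun (i : Fin n) (j : Fin k) => (A ^ (j : ℕ) * B) i c).rank = n) :
    reachableSubspace A B k = ⊤ := by
  have cols_span : LinearMap.range
      (Matrix.of fun (i : Fin n) (j : Fin k) => (A ^ (j : ℕ) * B) i c).mulVecLin = ⊤ :=
    Submodule.eq_top_of_finrank_eq (by rw [Module.finrank_fin_fun]; exact h)
  rw [eq_top_iff, ← cols_span, range_mulVecLin, Submodule.span_le, Set.range_subset_iff]
  intro j
  have col_mem : (A ^ (j : ℕ) * B).col c ∈ LinearMap.range (A ^ (j : ℕ) * B).mulVecLin :=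
    ⟨Pi.single c 1, mulVec_single_one _ c⟩
  exact Submodule.mem_iSup_of_mem (j : ℕ) (Submodule.mem_iSup_of_mem j.is_lt col_mem)

theorem ctrlS_eq_comap_pow (k : ℕ) :
    ctrlS A B k = (reachableSubspace A B (k + 1)).comap (A ^ k).mulVecLin := by
  induction k with
  | zero => simp [ctrlS, reachableSubspace_one]
  | succ k ih =>
    rw [ctrlS, ih, reachableSubspace_succ A B (k + 1), comap_sup_map_eq, pow_succ, mulVecLin_mul,
      Submodule.comap_comp]

theorem ctrlS_mono : Monotone (ctrlS A B) := by
  refine monotone_nat_of_le_succ fun k => ?_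
  induction k with
  | zero => exact le_sup_right
  | succ k ih => exact sup_le_sup_right (Submodule.comap_mono ih) _

end Subspaces

theorem of_const_mul_mulVec {ι κ R : Type*} [Fintype κ] [NonUnitalSemiring R] (c : R)
    (w v : κ → R) :
    (Matrix.of fun (_ : ι) (j : κ) => c * w j) *ᵥ v = fun _ => c * (w ⬝ᵥ v) :=
  funext fun _ => smul_dotProduct c w v

section Deadbeat

variable {F : Type*} [Field F] {n m : ℕ} {A : Matrix (Fin n) (Fin n) F}
  {B : Matrix (Fin n) (Fin m) F}

theorem vecMul_ne_zero_of_ctrlS_succ_eq_top {k : ℕ} {w : Fin n → F} (hw : w ≠ 0)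
    (hperp : ∀ v, A *ᵥ v ∈ ctrlS A B k → w ⬝ᵥ v = 0) (htop : ctrlS A B (k + 1) = ⊤) :
    w ᵥ* B ≠ 0 := by
  refine fun hwB => hw (dotProduct_eq_zero w fun x => ?_)
  have hx : x ∈ ctrlS A B (k + 1) := htop ▸ Submodule.mem_top
  obtain ⟨v, hv, _, ⟨u, rfl⟩, rfl⟩ := Submodule.mem_sup.1 hx
  rw [dotProduct_add, hperp v hv, mulVecLin_apply, dotProduct_mulVec, hwB, zero_dotProduct,
    add_zero]

theorem pow_mul_mulVec_eq_zero_of_mem_ctrlS {P : Matrix (Fin n) (Fin n) F} {k : ℕ}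
    (hPB : P * B = 0) (hfix : ∀ j < k, ∀ v, A *ᵥ v ∈ ctrlS A B j → P *ᵥ v = v)
    {x : Fin n → F} (hx : x ∈ ctrlS A B k) : ((P * A) ^ k * P) *ᵥ x = 0 := by
  have hPBu (u : Fin m → F) : P *ᵥ (B *ᵥ u) = 0 := by rw [mulVec_mulVec, hPB, zero_mulVec]
  induction k generalizing x with
  | zero =>
    obtain ⟨u, rfl⟩ := hx
    rw [pow_zero, one_mul, mulVecLin_apply, hPBu]
  | succ k ih =>
    obtain ⟨v, hv, _, ⟨u, rfl⟩, rfl⟩ := Submodule.mem_sup.1 hx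
    have hP : P *ᵥ (v + B *ᵥ u) = v := by
      rw [mulVec_add, hPBu, add_zero, hfix k k.lt_succ_self v hv]
    calc ((P * A) ^ (k + 1) * P) *ᵥ (v + B *ᵥ u)
        = (P * A) ^ (k + 1) *ᵥ v := by rw [← mulVec_mulVec, hP]
      _ = ((P * A) ^ k * P) *ᵥ (A *ᵥ v) := by rw [pow_succ, mulVec_mulVec, mul_assoc]
      _ = 0 := ih (fun j hj => hfix j (hj.trans k.lt_succ_self)) hv

theorem pow_succ_eq_zero_of_ctrlS_eq_top {K : Matrix (Fin m) (Fin n) F} {k : ℕ}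
    (hKB : K * B = 1) (hK : ∀ j < k, ∀ v, A *ᵥ v ∈ ctrlS A B j → K *ᵥ v = 0)
    (htop : ctrlS A B k = ⊤) :
    (A * (1 - B * K)) ^ (k + 1) = 0 ∧ (A - B * (K * A)) ^ (k + 1) = 0 := by
  set P := 1 - B * K with hP
  have hPB : P * B = 0 := by
    rw [hP, Matrix.sub_mul, Matrix.one_mul, Matrix.mul_assoc, hKB, Matrix.mul_one, sub_self]
  have hfix (j) (hj : j < k) (v) (hv : A *ᵥ v ∈ ctrlS A B j) : P *ᵥ v = v := by
    rw [hP, sub_mulVec, one_mulVec, ← mulVec_mulVec, hK j hj v hv, mulVec_zero, sub_zero]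
  have hzero : (P * A) ^ k * P = 0 := by
    refine mulVec_injective (funext fun x => ?_)
    rw [zero_mulVec]
    exact pow_mul_mulVec_eq_zero_of_mem_ctrlS hPB hfix (htop ▸ Submodule.mem_top)
  constructor
  · rw [pow_succ, ← mul_assoc, mul_pow_mul, mul_assoc, hzero, mul_zero]
  · have hPA : A - B * (K * A) = P * A := by rw [hP, sub_mul, one_mul, Matrix.mul_assoc]
    rw [hPA, pow_succ, ← mul_assoc, hzero, zero_mul]

end Deadbeat

theorem stmt_19_general {F : Type*} [Field F] {n : ℕ} (hn : 2 ≤ n)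
    (A : Matrix (Fin n) (Fin n) F) (B : Matrix (Fin n) (Fin 1) F)
    (hctrb : (Matrix.of fun (i : Fin n) (j : Fin n) => ((A ^ (j : ℕ)) * B) i 0).rank = n)
    (w : Fin n → F) (hw : w ≠ 0)
    (hperp : ∀ v : Fin n → F, A.mulVec v ∈ ctrlS A B (n - 2) → w ⬝ᵥ v = 0) :
    w ⬝ᵥ (fun i => B i 0) ≠ 0 ∧
      (A * (1 - B * Matrix.of fun (_ : Fin 1) (j : Fin n) =>
        (w ⬝ᵥ fun i => B i 0)⁻¹ * w j)) ^ n = 0 ∧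
      (A - B * ((Matrix.of fun (_ : Fin 1) (j : Fin n) =>
        (w ⬝ᵥ fun i => B i 0)⁻¹ * w j) * A)) ^ n = 0 := by
  obtain ⟨k, rfl⟩ := Nat.exists_eq_add_of_le' hn
  have htop : ctrlS A B (k + 1) = ⊤ := by
    rw [ctrlS_eq_comap_pow, reachableSubspace_eq_top_of_rank_eq hctrb, Submodule.comap_top]
  have hwB : w ⬝ᵥ (fun i => B i 0) ≠ 0 := by
    obtain ⟨i, hi⟩ := Function.ne_iff.1 (vecMul_ne_zero_of_ctrlS_succ_eq_top hw hperp htop)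
    rwa [Subsingleton.elim i 0] at hi
  refine ⟨hwB, pow_succ_eq_zero_of_ctrlS_eq_top ?_ (fun j hj v hv => ?_) htop⟩
  · ext i j
    rw [Subsingleton.elim j 0, Subsingleton.elim i 0, one_apply_eq, ← inv_mul_cancel₀ hwB]
    exact congrFun (of_const_mul_mulVec _ w fun i => B i 0) 0
  · rw [of_const_mul_mulVec, hperp v (ctrlS_mono A B (Nat.le_of_lt_succ hj) hv), mul_zero]
    rfl

/-- Correctness of the deadbeat gain algorithm: for an invertible `A` and a
controllable pair `(A,B)` with scalar input, if the nonzero vector `w` is orthogonal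
to `A⁻¹(S_{n-2})` then `wᵀB ≠ 0`, and `K₂ := (wᵀB)⁻¹wᵀ` makes `A(I - BK₂)` nilpotent;
consequently `K := K₂A` is a deadbeat gain, i.e. `A - BK` is nilpotent. -/
theorem stmt_19 {n : ℕ} (hn : 2 ≤ n) (A : Matrix (Fin n) (Fin n) ℝ) (hA : IsUnit A)
    (B : Matrix (Fin n) (Fin 1) ℝ)
    (hctrb : (Matrix.of fun (i : Fin n) (j : Fin n) => ((A ^ (j : ℕ)) * B) i 0).rank = n)
    (w : Fin n → ℝ) (hw : w ≠ 0)
    (hperp : ∀ v : Fin n → ℝ, A.mulVec v ∈ ctrlS A B (n - 2) → w ⬝ᵥ v = 0) :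
    w ⬝ᵥ (fun i => B i 0) ≠ 0 ∧
      (A * (1 - B * Matrix.of fun (_ : Fin 1) (j : Fin n) =>
        (w ⬝ᵥ fun i => B i 0)⁻¹ * w j)) ^ n = 0 ∧
      (A - B * ((Matrix.of fun (_ : Fin 1) (j : Fin n) =>
        (w ⬝ᵥ fun i => B i 0)⁻¹ * w j) * A)) ^ n = 0 :=
  stmt_19_general hn A B hctrb w hw hperp
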